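/- Let p ≥ 5 be prime with p ≡ 2 (mod 3), X_p = {α ∈ ZMod p : α ≠ 0 and α ≠ -1}, and consider the action on X_p of the group generated by U(α) = -(1+α)⁻¹ and V(α) = α⁻¹. Then the number of orbits of this action having exactly six elements is (p-5)/6. -/

import Mathlib

/-!
The permutations satisfy `u³ = v² = 1` and `u v = v u²`, so the orbit of `α` is
`{α, uα, u²α, vα, vuα, vu²α}` (`orbit_eq`). Comparing these six fractions in `α` pairwise, a
coincidence forces `α ∈ {1, -2, -1/2}` or `α² + α + 1 = 0` (`nodup_values_iff`). The quadratic has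
no root when `p ≡ 2 (mod 3)`, since a root satisfies `α³ = 1`, hence `α = α^p = α²`
(`sq_add_self_add_one_ne_zero`). The points with a six-element orbit are therefore all but three of
the `p - 2` elements of `X_p`, and they fall into classes of size six.
-/

/-- The relations `u³ = v² = 1`, `u v = v u²` make the six-element list below stable under the
group, so that it exhausts the orbit. -/
lemma orbit_eq {X : Type*} [DecidableEq X] (u v : Equiv.Perm X) (huuu : ∀ x, u (u (u x)) = x)
    (hvv : ∀ x, v (v x) = x) (huv : ∀ x, u (v x) = v (u (u x))) (a : X) :
    MulAction.orbit (Subgroup.closure {u, v}) a =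
      ([a, u a, u (u a), v a, v (u a), v (u (u a))].toFinset : Set X) := by
  set T : Set X := ([a, u a, u (u a), v a, v (u a), v (u (u a))].toFinset : Set X) with hT
  have hmem : ∀ x, x ∈ T ↔ x = a ∨ x = u a ∨ x = u (u a) ∨ x = v a ∨ x = v (u a) ∨
      x = v (u (u a)) := by
    intro x; simp [hT]
  have hu1 : ∀ x, x ∈ T → u x ∈ T := by
    intro x hx
    rw [hmem] at hx ⊢
    rcases hx with rfl | rfl | rfl | rfl | rfl | rfl <;> simp [huuu, huv]
  have hv1 : ∀ x, x ∈ T → v x ∈ T := by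
    intro x hx
    rw [hmem] at hx ⊢
    rcases hx with rfl | rfl | rfl | rfl | rfl | rfl <;> simp [hvv]
  have key : ∀ g ∈ Subgroup.closure {u, v}, ∀ x, x ∈ T ↔ g x ∈ T := by
    intro g hg
    induction hg using Subgroup.closure_induction with
    | mem g hg =>
      intro x
      rcases hg with rfl | rfl
      · exact ⟨hu1 x, fun h => by simpa [huuu] using hu1 _ (hu1 _ h)⟩
      · exact ⟨hv1 x, fun h => by simpa [hvv] using hv1 _ h⟩
    | one => simp
    | mul g h _ _ ihg ihh => intro x; rw [ihh x, ihg (h x)]; rfl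
    | inv g _ ih => intro x; rw [ih (g⁻¹ x)]; simp
  have hU : u ∈ Subgroup.closure {u, v} := Subgroup.subset_closure (by simp)
  have hV : v ∈ Subgroup.closure {u, v} := Subgroup.subset_closure (by simp)
  ext x
  constructor
  · rintro ⟨⟨g, hg⟩, rfl⟩
    exact (key g hg a).1 ((hmem a).2 (Or.inl rfl))
  · intro hx
    rcases (hmem x).1 hx with rfl | rfl | rfl | rfl | rfl | rfl
    · exact MulAction.mem_orbit_self _
    · exact ⟨⟨u, hU⟩, rfl⟩
    · exact ⟨⟨u * u, mul_mem hU hU⟩, rfl⟩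
    · exact ⟨⟨v, hV⟩, rfl⟩
    · exact ⟨⟨v * u, mul_mem hV hU⟩, rfl⟩
    · exact ⟨⟨v * (u * u), mul_mem hV (mul_mem hU hU)⟩, rfl⟩

lemma sq_add_self_add_one_ne_zero (p : ℕ) [Fact p.Prime] (hp3 : p % 3 = 2)
    (h3 : (3 : ZMod p) ≠ 0) (x : ZMod p) : x ^ 2 + x + 1 ≠ 0 := by
  intro h
  have hx3 : x ^ 3 = 1 := by linear_combination (x - 1) * h
  have hpow : ∀ n : ℕ, n % 3 = 2 → x ^ n = x ^ 2 := by
    intro n hn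
    rw [← Nat.div_add_mod n 3, hn, pow_add, pow_mul, hx3, one_pow, one_mul]
  have hxp : x ^ 2 = x := (hpow p hp3).symm.trans (ZMod.pow_card x)
  have hx0 : x ≠ 0 := by rintro rfl; simp at h
  have hx1 : x = 1 := mul_left_cancel₀ hx0 (by linear_combination hxp)
  subst hx1
  exact h3 (by linear_combination h)

/-- The six values are those of the identity, `u`, `u²`, `v`, `vu`, `vu²` at `a`. -/
lemma nodup_values_iff {K : Type*} [Field K] (a : K) (h0 : a ≠ 0) (h1 : 1 + a ≠ 0)
    (hq : a ^ 2 + a + 1 ≠ 0) :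
    [a, -(1 + a)⁻¹, -(1 + a) * a⁻¹, a⁻¹, -(1 + a), -a * (1 + a)⁻¹].Nodup ↔
      a ≠ 1 ∧ a ≠ -2 ∧ 2 * a ≠ -1 := by
  have hi : a * a⁻¹ = 1 := mul_inv_cancel₀ h0
  have hj : (1 + a) * (1 + a)⁻¹ = 1 := mul_inv_cancel₀ h1
  generalize a⁻¹ = b at *
  generalize (1 + a)⁻¹ = c at *
  simp only [List.nodup_cons, List.mem_cons, List.not_mem_nil, or_false, not_or,
    List.nodup_nil, not_false_eq_true, and_true]
  constructor
  · intro h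
    refine ⟨?_, ?_, ?_⟩ <;> grind
  · rintro ⟨ha, hb, hc⟩
    refine ⟨⟨?_, ?_, ?_, ?_, ?_⟩, ⟨?_, ?_, ?_, ?_⟩, ⟨?_, ?_, ?_⟩, ⟨?_, ?_⟩, ?_⟩ <;> grind

/-- For a prime `p ≥ 5` with `p ≡ 2 (mod 3)`, the number of orbits of cardinality six of the
action on `X_p` of the group generated by `U(α) = -(1+α)⁻¹` and `V(α) = α⁻¹` is `(p-5)/6`. -/
theorem fermat_S3_number_of_six_orbits_two_mod_three (p : ℕ) [Fact p.Prime] (hp : 5 ≤ p)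
    (hp3 : p % 3 = 2)
    (u v : Equiv.Perm {α : ZMod p // α ≠ 0 ∧ α ≠ -1})
    (hu : ∀ α : {α : ZMod p // α ≠ 0 ∧ α ≠ -1}, (↑(u α) : ZMod p) = -(1 + (α : ZMod p))⁻¹)
    (hv : ∀ α : {α : ZMod p // α ≠ 0 ∧ α ≠ -1}, (↑(v α) : ZMod p) = ((α : ZMod p))⁻¹) :
    Set.ncard {s : Set {α : ZMod p // α ≠ 0 ∧ α ≠ -1} |
      (∃ α, s = MulAction.orbit (Subgroup.closure {u, v}) α) ∧ s.ncard = 6} = (p - 5) / 6 := by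
  classical
  have hsmall : ∀ n : ℕ, 0 < n → n < 5 → (n : ZMod p) ≠ 0 := by
    intro n hn hn5 h
    have := Nat.le_of_dvd hn ((ZMod.natCast_eq_zero_iff n p).1 h)
    omega
  have h2 : (2 : ZMod p) ≠ 0 := by exact_mod_cast hsmall 2 (by norm_num) (by norm_num)
  have h3 : (3 : ZMod p) ≠ 0 := by exact_mod_cast hsmall 3 (by norm_num) (by norm_num)
  have hX : ∀ a : {α : ZMod p // α ≠ 0 ∧ α ≠ -1}, (1 + (a : ZMod p)) ≠ 0 :=
    fun a h => a.2.2 (by linear_combination h)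
  have huu : ∀ a, ((u (u a) : {α : ZMod p // α ≠ 0 ∧ α ≠ -1}) : ZMod p) =
      -(1 + (a : ZMod p)) * (a : ZMod p)⁻¹ := by
    intro a
    have h0 := a.2.1
    have h1 := hX a
    have h4 := hX (u a)
    rw [hu, hu]
    rw [hu] at h4
    rw [neg_mul, neg_inj]
    apply inv_eq_of_mul_eq_one_right
    field_simp
    ring
  have huuu : ∀ x, u (u (u x)) = x := by
    intro a
    have h0 := a.2.1
    apply Subtype.ext
    rw [hu, huu]
    have : 1 + -(1 + (a : ZMod p)) * (a : ZMod p)⁻¹ = -(a : ZMod p)⁻¹ := by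
      field_simp
      ring
    rw [this, inv_neg, inv_inv, neg_neg]
  have hvv : ∀ x, v (v x) = x := fun a => Subtype.ext (by rw [hv, hv, inv_inv])
  have huv : ∀ x, u (v x) = v (u (u x)) := by
    intro a
    have h0 := a.2.1
    have h1 := hX a
    apply Subtype.ext
    rw [hu, hv, hv, huu, ← inv_neg, inv_inj]
    field_simp
    ring
  have hcard : ∀ a : {α : ZMod p // α ≠ 0 ∧ α ≠ -1},
      (MulAction.orbit (Subgroup.closure {u, v}) a).ncard = 6 ↔
      (a : ZMod p) ≠ 1 ∧ (a : ZMod p) ≠ -2 ∧ 2 * (a : ZMod p) ≠ -1 := by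
    intro a
    have h0 := a.2.1
    have h1 := hX a
    rw [← nodup_values_iff (a : ZMod p) h0 h1 (sq_add_self_add_one_ne_zero p hp3 h3 _),
      orbit_eq u v huuu hvv huv, Set.ncard_coe_finset]
    have hmap : [(a : ZMod p), -(1 + (a : ZMod p))⁻¹, -(1 + (a : ZMod p)) * (a : ZMod p)⁻¹,
        (a : ZMod p)⁻¹, -(1 + (a : ZMod p)), -(a : ZMod p) * (1 + (a : ZMod p))⁻¹] =
        [a, u a, u (u a), v a, v (u a), v (u (u a))].map Subtype.val := by
      simp only [List.map_cons, List.map_nil, hv, huu]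
      have hvuu : -(a : ZMod p) * (1 + (a : ZMod p))⁻¹ =
          (-(1 + (a : ZMod p)) * (a : ZMod p)⁻¹)⁻¹ := by
        rw [mul_inv, inv_inv, inv_neg]
        ring
      rw [hu, inv_neg, inv_inv, hvuu]
    rw [hmap, List.nodup_map_iff Subtype.val_injective]
    exact Multiset.toFinset_card_eq_card_iff_nodup
      (m := Multiset.ofList [a, u a, u (u a), v a, v (u a), v (u (u a))])
  -- The points with a six-element orbit are the residues other than `0, -1` (outside `X_p`)
  -- and `1, -2, -1/2` (fixed by one of `v`, `vu`, `vu²`).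
  set G : Finset {α : ZMod p // α ≠ 0 ∧ α ≠ -1} :=
    Finset.univ.filter fun a => (MulAction.orbit (Subgroup.closure {u, v}) a).ncard = 6 with hG
  have hGcard : G.card = p - 5 := by
    have himg : G.map (Function.Embedding.subtype _) =
        ({0, -1, 1, -2, -2⁻¹} : Finset (ZMod p))ᶜ := by
      ext x
      have h5 : 2 * x = -1 ↔ x = -2⁻¹ := by
        constructor <;> intro h <;> grind
      simp [hG, hcard, ← h5]
      tauto
    have h5 : ({0, -1, 1, -2, -2⁻¹} : Finset (ZMod p)).card = 5 := by
      have hi : (2 : ZMod p) * 2⁻¹ = 1 := mul_inv_cancel₀ h2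
      generalize (2 : ZMod p)⁻¹ = c at *
      repeat rw [Finset.card_insert_of_notMem]
      · simp
      all_goals
        simp only [Finset.mem_insert, Finset.mem_singleton]
        grind
    rw [← Finset.card_map (Function.Embedding.subtype _), himg, Finset.card_compl, h5, ZMod.card]
  have hset : {s : Set {α : ZMod p // α ≠ 0 ∧ α ≠ -1} |
      (∃ α, s = MulAction.orbit (Subgroup.closure {u, v}) α) ∧ s.ncard = 6} =
      (G.image fun a => MulAction.orbit (Subgroup.closure {u, v}) a : Finset (Set _)) := by
    ext s
    simp only [Set.mem_ofPred_eq, Finset.coe_image, Set.mem_image, hG, Finset.mem_coe,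
      Finset.mem_filter, Finset.mem_univ, true_and]
    constructor
    · rintro ⟨⟨a, rfl⟩, h⟩
      exact ⟨a, h, rfl⟩
    · rintro ⟨a, h, rfl⟩
      exact ⟨⟨a, rfl⟩, h⟩
  rw [hset, Set.ncard_coe_finset]
  have hfib := Finset.card_eq_sum_card_image
    (fun a => MulAction.orbit (Subgroup.closure {u, v}) a) G
  rw [Finset.sum_const_nat (m := 6)] at hfib
  · omega
  · intro s hs
    obtain ⟨a, ha, rfl⟩ := Finset.mem_image.1 hs
    have ha6 : (MulAction.orbit (Subgroup.closure {u, v}) a).ncard = 6 := by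
      simpa [hG] using ha
    rw [← ha6, ← Set.ncard_coe_finset]
    congr 1
    ext b
    simp only [hG, Finset.coe_filter, Finset.mem_filter, Finset.mem_univ, true_and,
      Set.mem_ofPred_eq, MulAction.orbit_eq_iff]
    constructor
    · exact fun h => h.2
    · intro h
      exact ⟨by rw [MulAction.orbit_eq_iff.2 h, ha6], h⟩
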